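/- Let B be a category with all pullbacks and p : E ⥤ B a bifibration of categories. Let (p ↓ B) be the comma category with objects (e : E, b : B, u : p e ⟶ b), let ∂₁ : (p ↓ B) ⥤ B be the projection (e,b,u) ↦ b (a bifibration), and let ι : E ⥤ (p ↓ B) over B be the functor e ↦ (e, p e, 𝟙). Then p satisfies the Beck–Chevalley condition if and only if ι admits a left adjoint τ over B (with ∂₁ ∘ τ = p and the unit and counit of the adjunction vertical) — given on objects by τ(e, b, u) = u_! e — and this τ is a cartesian functor over B, i.e. τ sends ∂₁-cartesian morphisms of (p ↓ B) to p-cartesian morphisms of E. -/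

import Mathlib

open CategoryTheory CategoryTheory.Limits

namespace MoensPaper

variable {E : Type*} [Category E] {B : Type*} [Category B]

/-- A morphism `φ` of `E` is (strongly) cocartesian over `p`. -/
def IsCocart (p : E ⥤ B) {x y : E} (φ : x ⟶ y) : Prop :=
  ∀ {z : E} (ψ : x ⟶ z) (v : p.obj y ⟶ p.obj z),
    p.map ψ = p.map φ ≫ v → ∃! τ : y ⟶ z, p.map τ = v ∧ φ ≫ τ = ψ

/-- A morphism `φ` of `E` is (strongly) cartesian over `p`. -/
def IsCart (p : E ⥤ B) {x y : E} (φ : x ⟶ y) : Prop :=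
  ∀ {z : E} (ψ : z ⟶ y) (v : p.obj z ⟶ p.obj x),
    p.map ψ = v ≫ p.map φ → ∃! τ : z ⟶ x, p.map τ = v ∧ τ ≫ φ = ψ

/-- `p` is a cocartesian fibration (Grothendieck opfibration): every morphism of `B`
with domain `p.obj x` admits a cocartesian lift with source `x`. -/
def IsCocartFib (p : E ⥤ B) : Prop :=
  ∀ (x : E) (b : B) (u : p.obj x ⟶ b),
    ∃ (y : E) (φ : x ⟶ y) (h : p.obj y = b),
      IsCocart p φ ∧ p.map φ = u ≫ eqToHom h.symm

/-- `p` is a cartesian fibration (Grothendieck fibration): every morphism of `B`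
with codomain `p.obj y` admits a cartesian lift with target `y`. -/
def IsCartFib (p : E ⥤ B) : Prop :=
  ∀ (y : E) (b : B) (u : b ⟶ p.obj y),
    ∃ (x : E) (φ : x ⟶ y) (h : p.obj x = b),
      IsCart p φ ∧ p.map φ = eqToHom h ≫ u

/-- The Beck–Chevalley condition: for every commutative square in `E` lying over a
pullback square in `B` whose bottom edge is cocartesian and whose two vertical edges
are cartesian, the top edge is cocartesian. -/
def BCC (p : E ⥤ B) : Prop :=
  ∀ {d' e' d e : E} (f' : d' ⟶ e') (g' : d' ⟶ d) (g : e' ⟶ e) (f : d ⟶ e),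
    f' ≫ g = g' ≫ f →
    IsPullback (p.map f') (p.map g') (p.map g) (p.map f) →
    IsCocart p f → IsCart p g → IsCart p g' →
    IsCocart p f'

/-- The canonical functor `ι : E ⥤ (p ↓ B)`, `e ↦ (e, p e, 𝟙)`. -/
def iota (p : E ⥤ B) : E ⥤ Comma p (𝟭 B) where
  obj e := { left := e, right := p.obj e, hom := 𝟙 (p.obj e) }
  map f := { left := f, right := p.map f, w := by simp }

/-! Cartesian morphisms of `(p ↓ B)` are the squares whose image in `B` is a pullback and whose
component in `E` is cartesian. For a left adjoint `τ` of `ι` with cocartesian vertical unit, the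
naturality square of the unit at such an `m` therefore lies over a pullback square; its horizontal
edges are cocartesian and its vertical edges are `m.left` and `τ m`. If `τ m` is replaced by the
cartesian part of its vertical–cartesian factorization, BCC makes the new top edge cocartesian, so
the vertical part is invertible. Conversely, the vertical edges of a BCC square form a cartesian
morphism `m`, and the transpose of the top edge is vertical; it is a cartesian morphism when `τ m`
is, hence invertible, and then the top edge is cocartesian. -/

theorem isHomLift_obj_iff {p : E ⥤ B} {x y : E} {v : p.obj x ⟶ p.obj y} {φ : x ⟶ y} :
    p.IsHomLift v φ ↔ p.map φ = v :=
  ⟨fun _ ↦ (IsHomLift.eq_of_isHomLift p v φ).symm, by rintro rfl; infer_instance⟩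

theorem isPullback_of_existsUnique_lift {a b c d : B} {fst : a ⟶ b} {snd : a ⟶ c} {f : b ⟶ d}
    {g : c ⟶ d} (w : fst ≫ f = snd ≫ g)
    (h : ∀ {t : B} (u : t ⟶ b) (v : t ⟶ c), u ≫ f = v ≫ g →
      ∃! l : t ⟶ a, l ≫ fst = u ∧ l ≫ snd = v) :
    IsPullback fst snd f g := by
  choose lift hlift hunique using @h
  exact ⟨⟨w⟩, ⟨PullbackCone.IsLimit.mk w (fun s ↦ lift s.fst s.snd s.condition)
    (fun s ↦ (hlift _ _ s.condition).1) (fun s ↦ (hlift _ _ s.condition).2)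
    fun s l hu hv ↦ hunique _ _ s.condition l ⟨hu, hv⟩⟩⟩

namespace IsCart

variable {p : E ⥤ B} {x y z : E} {φ : x ⟶ y} {χ : y ⟶ z}

theorem iff_isStronglyCartesian : IsCart p φ ↔ p.IsStronglyCartesian (p.map φ) φ := by
  constructor
  · refine fun h ↦ ⟨fun v ψ hψ ↦ ?_⟩
    simpa only [isHomLift_obj_iff] using h ψ v (isHomLift_obj_iff.mp hψ)
  · intro h z ψ v hψ
    have : p.IsHomLift (v ≫ p.map φ) ψ := isHomLift_obj_iff.mpr hψ
    simpa only [isHomLift_obj_iff] using h.universal_property' v ψ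

theorem hom_ext (h : IsCart p φ) {w : E} {σ τ : w ⟶ x} (hp : p.map σ = p.map τ)
    (hφ : σ ≫ φ = τ ≫ φ) : σ = τ :=
  (h (τ ≫ φ) (p.map τ) (p.map_comp _ _)).unique ⟨hp, hφ⟩ ⟨rfl, rfl⟩

theorem isIso (h : IsCart p φ) [IsIso (p.map φ)] : IsIso φ :=
  have := iff_isStronglyCartesian.mp h
  Functor.IsStronglyCartesian.isIso_of_base_isIso p (p.map φ) φ

theorem isIso_comp (h : IsCart p χ) (φ : x ⟶ y) [IsIso φ] : IsCart p (φ ≫ χ) := by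
  rw [iff_isStronglyCartesian] at *
  rw [p.map_comp]
  infer_instance

theorem comp_isIso (h : IsCart p φ) (χ : y ⟶ z) [IsIso χ] : IsCart p (φ ≫ χ) := by
  rw [iff_isStronglyCartesian] at *
  rw [p.map_comp]
  infer_instance

theorem of_comp (hχ : IsCart p χ) (h : IsCart p (φ ≫ χ)) : IsCart p φ := by
  rw [iff_isStronglyCartesian] at *
  rw [p.map_comp] at h
  exact Functor.IsStronglyCartesian.of_comp p (g := p.map χ) (ψ := χ)

end IsCart

namespace IsCocart

variable {p : E ⥤ B} {x y z : E} {φ : x ⟶ y} {χ : y ⟶ z}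

theorem iff_isStronglyCocartesian : IsCocart p φ ↔ p.IsStronglyCocartesian (p.map φ) φ := by
  constructor
  · refine fun h ↦ ⟨fun v ψ hψ ↦ ?_⟩
    simpa only [isHomLift_obj_iff] using h ψ v (isHomLift_obj_iff.mp hψ)
  · intro h z ψ v hψ
    have : p.IsHomLift (p.map φ ≫ v) ψ := isHomLift_obj_iff.mpr hψ
    simpa only [isHomLift_obj_iff] using h.universal_property' v ψ

theorem hom_ext (h : IsCocart p φ) {w : E} {σ τ : y ⟶ w} (hp : p.map σ = p.map τ)
    (hφ : φ ≫ σ = φ ≫ τ) : σ = τ :=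
  (h (φ ≫ τ) (p.map τ) (p.map_comp _ _)).unique ⟨hp, hφ⟩ ⟨rfl, rfl⟩

theorem comp_isIso (h : IsCocart p φ) (χ : y ⟶ z) [IsIso χ] : IsCocart p (φ ≫ χ) := by
  rw [iff_isStronglyCocartesian] at *
  rw [p.map_comp]
  infer_instance

theorem isIso_of_comp (hφ : IsCocart p φ) (h : IsCocart p (φ ≫ χ)) [IsIso (p.map χ)] :
    IsIso χ := by
  rw [iff_isStronglyCocartesian] at *
  rw [p.map_comp] at h
  have : p.IsStronglyCocartesian (p.map χ) χ :=
    Functor.IsStronglyCocartesian.of_comp p (f := p.map φ) (φ := φ)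
  exact Functor.IsStronglyCocartesian.isIso_of_base_isIso p (p.map χ) χ

end IsCocart

theorem IsCartFib.exists_vertical_comp_isCart {p : E ⥤ B} (hcart : IsCartFib p) {x y : E}
    (φ : x ⟶ y) :
    ∃ (w : E) (k : x ⟶ w) (l : w ⟶ y), IsIso (p.map k) ∧ IsCart p l ∧ k ≫ l = φ := by
  obtain ⟨w, l, h, hl, hpl⟩ := hcart y (p.obj x) (p.map φ)
  obtain ⟨k, ⟨hpk, hkl⟩, -⟩ := hl φ (eqToHom h.symm) (by simp [hpl])
  exact ⟨w, k, l, by rw [hpk]; infer_instance, hl, hkl⟩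

section Comma

variable {p : E ⥤ B} {X Y : Comma p (𝟭 B)}

theorem isCart_snd_of_isPullback (m : X ⟶ Y)
    (hpb : IsPullback X.hom (p.map m.left) m.right Y.hom) (hl : IsCart p m.left) :
    IsCart (Comma.snd p (𝟭 B)) m := by
  intro Z ψ (v : Z.right ⟶ X.right) (hv : ψ.right = v ≫ m.right)
  have hψ : p.map ψ.left ≫ Y.hom = Z.hom ≫ ψ.right := ψ.w
  obtain ⟨t, ⟨hpt, htm⟩, -⟩ := hl ψ.left
    (hpb.lift (Z.hom ≫ v) (p.map ψ.left) (by rw [hψ, hv]; exact Category.assoc _ _ _))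
    (hpb.lift_snd _ _ _).symm
  have ht : p.map t ≫ X.hom = Z.hom ≫ v := by rw [hpt]; exact hpb.lift_fst _ _ _
  refine ⟨⟨t, v, ht⟩, ⟨rfl, CommaMorphism.ext htm hv.symm⟩, ?_⟩
  rintro s ⟨rfl, rfl⟩
  refine CommaMorphism.ext (hl.hom_ext (hpb.hom_ext (s.w.trans ht.symm) ?_) htm.symm) rfl
  simp only [← p.map_comp, htm, Comma.comp_left]

/- A cartesian `m` admits a map from the object obtained by replacing `m.left` by its cartesian
part; this map splits the vertical part of `m.left`. -/
theorem IsCart.left_of_snd (hcart : IsCartFib p) {m : X ⟶ Y}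
    (hm : IsCart (Comma.snd p (𝟭 B)) m) : IsCart p m.left := by
  obtain ⟨w, k, l, hk, hl, hkl⟩ := hcart.exists_vertical_comp_isCart m.left
  let W : Comma p (𝟭 B) := ⟨w, X.right, inv (p.map k) ≫ X.hom⟩
  let kW : X ⟶ W := ⟨k, 𝟙 _, by simp [W]⟩
  have hlY : p.map l ≫ Y.hom = W.hom ≫ m.right := by
    have hmw : p.map m.left ≫ Y.hom = X.hom ≫ m.right := m.w
    simp [W, ← hmw, ← hkl]
  obtain ⟨s, ⟨(hs : s.right = 𝟙 _), hsm⟩, -⟩ :=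
    hm (⟨l, m.right, hlY⟩ : W ⟶ Y) (𝟙 _) (Category.id_comp _).symm
  have hsl : s.left ≫ m.left = l := congrArg CommaMorphism.left hsm
  have hks : kW ≫ s = 𝟙 X := hm.hom_ext
    ((Category.id_comp _).trans hs)
    (CommaMorphism.ext (by simp [kW, hsl, hkl]) (by simp [kW, hs]))
  have hks' : k ≫ s.left = 𝟙 _ := congrArg CommaMorphism.left hks
  have hps : inv (p.map k) = p.map s.left :=
    IsIso.inv_eq_of_hom_inv_id (by rw [← p.map_comp, hks', p.map_id])
  have hsk : s.left ≫ k = 𝟙 _ := hl.hom_ext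
    (by rw [p.map_comp, ← hps, IsIso.inv_hom_id, p.map_id])
    (by simp [hkl, hsl])
  have : IsIso k := ⟨s.left, hks', hsk⟩
  rw [← hkl]
  apply hl.isIso_comp

/- Every cone in `B` has the form `p.obj z`, with the leg `p.obj z ⟶ p.obj Y.left` the image of a
cartesian morphism, so it is a morphism into `Y` in the comma category. -/
theorem IsCart.isPullback_of_snd (hcart : IsCartFib p) {m : X ⟶ Y}
    (hm : IsCart (Comma.snd p (𝟭 B)) m) : IsPullback X.hom (p.map m.left) m.right Y.hom := by
  have hl : IsCart p m.left := hm.left_of_snd hcart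
  have existsUnique_lift {c : B} (a : c ⟶ X.right) (b : c ⟶ p.obj Y.left)
      (hab : a ≫ m.right = b ≫ Y.hom) :
      ∃! v : c ⟶ p.obj X.left, v ≫ X.hom = a ∧ v ≫ p.map m.left = b := by
    obtain ⟨z, ψ, rfl, -, hψ⟩ := hcart Y.left c b
    obtain rfl : p.map ψ = b := by simpa using hψ
    let Z : Comma p (𝟭 B) := ⟨z, X.right, a⟩
    obtain ⟨t, ⟨(ht : t.right = 𝟙 _), htm⟩, ht_unique⟩ :=
      hm (⟨ψ, m.right, hab.symm⟩ : Z ⟶ Y) (𝟙 _) (Category.id_comp _).symm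
    have htw : p.map t.left ≫ X.hom = a ≫ t.right := t.w
    refine ⟨p.map t.left, ⟨?_, ?_⟩, ?_⟩
    · rw [htw, ht]; exact Category.comp_id _
    · rw [← p.map_comp]; exact congrArg (p.map ·.left) htm
    · rintro v ⟨hva, hvb⟩
      obtain ⟨s, ⟨rfl, hs⟩, -⟩ := hl ψ v hvb.symm
      let sZ : Z ⟶ X := ⟨s, 𝟙 _, hva.trans (Category.comp_id _).symm⟩
      have : sZ = t := ht_unique sZ ⟨rfl, CommaMorphism.ext hs (Category.id_comp _)⟩
      rw [← this]
  exact isPullback_of_existsUnique_lift m.w.symm existsUnique_lift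

theorem isCart_snd_iff (hcart : IsCartFib p) (m : X ⟶ Y) :
    IsCart (Comma.snd p (𝟭 B)) m ↔
      IsPullback X.hom (p.map m.left) m.right Y.hom ∧ IsCart p m.left :=
  ⟨fun hm ↦ ⟨hm.isPullback_of_snd hcart, hm.left_of_snd hcart⟩,
    fun h ↦ isCart_snd_of_isPullback m h.1 h.2⟩

theorem isCartFib_snd [HasPullbacks B] (hcart : IsCartFib p) :
    IsCartFib (Comma.snd p (𝟭 B)) := by
  intro Y b (u : b ⟶ Y.right)
  obtain ⟨x, l, h, hl, hpl⟩ := hcart Y.left _ (pullback.snd u Y.hom)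
  let X : Comma p (𝟭 B) := ⟨x, b, eqToHom h ≫ pullback.fst u Y.hom⟩
  have hpb : IsPullback X.hom (p.map l) u Y.hom := by
    rw [hpl]
    exact (IsPullback.of_hasPullback u Y.hom).of_iso (eqToIso h.symm) (Iso.refl _) (Iso.refl _)
      (Iso.refl _) (by simp [X]) (by simp) (by simp) (by simp)
  exact ⟨X, ⟨l, u, hpb.w.symm⟩, rfl, isCart_snd_of_isPullback _ hpb hl, (Category.id_comp _).symm⟩

theorem isCocartFib_snd (p : E ⥤ B) : IsCocartFib (Comma.snd p (𝟭 B)) := by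
  intro X b (u : X.right ⟶ b)
  let Y : Comma p (𝟭 B) := ⟨X.left, b, X.hom ≫ u⟩
  let m : X ⟶ Y := ⟨𝟙 _, u, by simp [Y]⟩
  refine ⟨Y, m, rfl, ?_, (Category.comp_id _).symm⟩
  intro Z ψ (v : b ⟶ Z.right) (hv : ψ.right = u ≫ v)
  have hψ : p.map ψ.left ≫ Z.hom = X.hom ≫ ψ.right := ψ.w
  refine ⟨⟨ψ.left, v, ?_⟩, ⟨rfl, CommaMorphism.ext (Category.id_comp _) hv.symm⟩, ?_⟩
  · exact hψ.trans (by rw [hv]; exact (Category.assoc _ _ _).symm)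
  · rintro s ⟨rfl, rfl⟩
    exact CommaMorphism.ext (Category.id_comp _).symm rfl

end Comma

section HomToIota

variable {p : E ⥤ B} {X Y : Comma p (𝟭 B)} {e e' : E}

/-- The component in `E` of a morphism `(x, b, u) ⟶ ι e`, typed as a morphism `x ⟶ e`. -/
def toTotal (η : X ⟶ (iota p).obj e) : X.left ⟶ e := η.left

/-- The component in `B` of a morphism `(x, b, u) ⟶ ι e`, typed as a morphism `b ⟶ p e`. -/
def toBase (η : X ⟶ (iota p).obj e) : X.right ⟶ p.obj e := η.right

theorem map_toTotal (η : X ⟶ (iota p).obj e) : p.map (toTotal η) = X.hom ≫ toBase η :=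
  (Category.comp_id _).symm.trans η.w

/-- The morphism `(x, b, u) ⟶ ι e` with given components in `E` and in `B`. -/
def homToIota (φ : X.left ⟶ e) (v : X.right ⟶ p.obj e) (h : p.map φ = X.hom ≫ v) :
    X ⟶ (iota p).obj e :=
  ⟨φ, v, (Category.comp_id _).trans h⟩

theorem hom_iota_ext {η θ : X ⟶ (iota p).obj e} (ht : toTotal η = toTotal θ)
    (hb : toBase η = toBase θ) : η = θ :=
  CommaMorphism.ext ht hb

@[simp]
theorem toBase_comp_map (η : X ⟶ (iota p).obj e) (k : e ⟶ e') :
    toBase (η ≫ (iota p).map k) = toBase η ≫ p.map k := rfl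

/-- `η : (x, b, u) ⟶ ι e` exhibits `e` as the pushforward `u_! x`. The object `e` need only lie
over `b` up to the isomorphism `toBase η`. -/
structure IsPushforward (η : X ⟶ (iota p).obj e) : Prop where
  isCocart : IsCocart p (toTotal η)
  isIso : IsIso (toBase η)

theorem IsPushforward.bijective_comp_map {η : X ⟶ (iota p).obj e} (hη : IsPushforward η)
    (e' : E) : Function.Bijective fun k : e ⟶ e' ↦ η ≫ (iota p).map k := by
  have := hη.isIso
  have hcocart : IsCocart p (toTotal η) := hη.isCocart
  constructor
  · intro k k' h
    exact hcocart.hom_ext ((cancel_epi (toBase η)).mp (congrArg toBase h)) (congrArg toTotal h)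
  · intro g
    obtain ⟨k, ⟨hpk, hk⟩, -⟩ := hcocart (toTotal g) (inv (toBase η) ≫ toBase g)
      (by simp [map_toTotal])
    exact ⟨k, hom_iota_ext hk (by simp [hpk])⟩

theorem IsCocartFib.exists_isPushforward (hcocart : IsCocartFib p) (X : Comma p (𝟭 B)) :
    ∃ (e : E) (h : p.obj e = X.right) (η : X ⟶ (iota p).obj e),
      IsPushforward η ∧ toBase η = eqToHom h.symm := by
  obtain ⟨e, φ, h, hφ, hpφ⟩ := hcocart X.left X.right X.hom
  exact ⟨e, h, homToIota φ (eqToHom h.symm) hpφ,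
    ⟨hφ, inferInstanceAs (IsIso (eqToHom h.symm))⟩, rfl⟩

end HomToIota

theorem exists_leftAdjoint_iota {p : E ⥤ B} (hcocart : IsCocartFib p) :
    ∃ (τ : Comma p (𝟭 B) ⥤ E) (adj : τ ⊣ iota p),
      τ ⋙ p = Comma.snd p (𝟭 B) ∧ ∀ X, IsPushforward (X := X) (adj.unit.app X) := by
  choose F hF η hη hηF using hcocart.exists_isPushforward
  let homEquiv (X : Comma p (𝟭 B)) (e : E) : (F X ⟶ e) ≃ (X ⟶ (iota p).obj e) :=
    Equiv.ofBijective _ ((hη X).bijective_comp_map e)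
  have homEquiv_comp (X : Comma p (𝟭 B)) (e e' : E) (g : e ⟶ e') (k : F X ⟶ e) :
      homEquiv X e' (k ≫ g) = homEquiv X e k ≫ (iota p).map g := by simp [homEquiv]
  let τ := Adjunction.leftAdjointOfEquiv homEquiv homEquiv_comp
  let adj : τ ⊣ iota p := Adjunction.adjunctionOfEquivLeft homEquiv homEquiv_comp
  have unit_eq (X : Comma p (𝟭 B)) : adj.unit.app X = η X := by
    simp [adj, homEquiv]
  have comp_unit {X Y : Comma p (𝟭 B)} (m : X ⟶ Y) : m ≫ η Y = η X ≫ (iota p).map (τ.map m) := by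
    rw [← unit_eq, ← unit_eq]
    exact adj.unit.naturality m
  refine ⟨τ, adj, CategoryTheory.Functor.ext hF fun X Y m ↦ ?_, fun X ↦ unit_eq X ▸ hη X⟩
  have h : m.right ≫ eqToHom (hF Y).symm = eqToHom (hF X).symm ≫ p.map (τ.map m) := by
    rw [← hηF, ← hηF]
    exact congrArg toBase (comp_unit m)
  change p.map (τ.map m) = eqToHom (hF X) ≫ m.right ≫ eqToHom (hF Y).symm
  rw [h, eqToHom_trans_assoc, eqToHom_refl, Category.id_comp]

section FiberedAdjoint

variable {p : E ⥤ B} {τ : Comma p (𝟭 B) ⥤ E} {adj : τ ⊣ iota p}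

section VerticalUnit

variable (hv : ∀ X, IsIso (toBase (X := X) (e := τ.obj X) (adj.unit.app X)))

include hv

theorem isIso_map_homEquiv_symm {X : Comma p (𝟭 B)} {e : E} (g : X ⟶ (iota p).obj e)
    [IsIso (toBase g)] : IsIso (p.map ((adj.homEquiv X e).symm g)) := by
  obtain ⟨k, rfl⟩ := (adj.homEquiv X e).surjective g
  have hbase : toBase (adj.homEquiv X e k) =
      toBase (X := X) (e := τ.obj X) (adj.unit.app X) ≫ p.map k := by
    rw [adj.homEquiv_unit]; rfl
  have := hv X
  rw [Equiv.symm_apply_apply]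
  exact IsIso.of_isIso_fac_left hbase.symm

theorem isIso_map_counit (e : E) : IsIso (p.map (adj.counit.app e)) := by
  rw [← adj.homEquiv_symm_id]
  have : IsIso (toBase (𝟙 ((iota p).obj e))) := inferInstanceAs (IsIso (𝟙 (p.obj e)))
  exact isIso_map_homEquiv_symm hv _

theorem isPullback_map_unit {X Y : Comma p (𝟭 B)} {m : X ⟶ Y}
    (hm : IsPullback X.hom (p.map m.left) m.right Y.hom) :
    IsPullback (p.map (toTotal (X := X) (e := τ.obj X) (adj.unit.app X))) (p.map m.left)
      (p.map (τ.map m)) (p.map (toTotal (X := Y) (e := τ.obj Y) (adj.unit.app Y))) := by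
  have := hv X
  have := hv Y
  rw [map_toTotal, map_toTotal]
  exact hm.paste_horiz (.of_horiz_isIso ⟨congrArg toBase (adj.unit.naturality m).symm⟩)

end VerticalUnit

variable (hu : ∀ X, IsPushforward (X := X) (e := τ.obj X) (adj.unit.app X))

include hu

theorem isCocart_toTotal_iff_isIso {X : Comma p (𝟭 B)} {e : E} (g : X ⟶ (iota p).obj e)
    [IsIso (toBase g)] : IsCocart p (toTotal g) ↔ IsIso ((adj.homEquiv X e).symm g) := by
  have := isIso_map_homEquiv_symm (fun X ↦ (hu X).isIso) g
  obtain ⟨k, rfl⟩ := (adj.homEquiv X e).surjective g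
  rw [Equiv.symm_apply_apply] at this ⊢
  rw [adj.homEquiv_unit]
  exact ⟨fun h ↦ IsCocart.isIso_of_comp (hu X).isCocart h,
    fun _ ↦ IsCocart.comp_isIso (hu X).isCocart k⟩

theorem bcc_of_preserves_isCart
    (hτ : ∀ {X Y : Comma p (𝟭 B)} (m : X ⟶ Y),
      IsCart (Comma.snd p (𝟭 B)) m → IsCart p (τ.map m)) : BCC p := by
  intro d' e' d e f' g' g f hsq hpb hf hg hg'
  let X : Comma p (𝟭 B) := ⟨d', p.obj e', p.map f'⟩
  let Y : Comma p (𝟭 B) := ⟨d, p.obj e, p.map f⟩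
  let m : X ⟶ Y := ⟨g', p.map g, hpb.w.symm⟩
  let α : X ⟶ (iota p).obj e' := homToIota f' (𝟙 _) (Category.comp_id _).symm
  let β : Y ⟶ (iota p).obj e := homToIota f (𝟙 _) (Category.comp_id _).symm
  have : IsIso (toBase α) := inferInstanceAs (IsIso (𝟙 (p.obj e')))
  have : IsIso (toBase β) := inferInstanceAs (IsIso (𝟙 (p.obj e)))
  have : IsIso (p.map ((adj.homEquiv X e').symm α)) :=
    isIso_map_homEquiv_symm (fun X ↦ (hu X).isIso) α
  have : IsIso ((adj.homEquiv Y e).symm β) := (isCocart_toTotal_iff_isIso hu β).mp hf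
  have hαβ : α ≫ (iota p).map g = m ≫ β :=
    hom_iota_ext hsq ((Category.id_comp _).trans (Category.comp_id _).symm)
  have hsq' : (adj.homEquiv X e').symm α ≫ g = τ.map m ≫ (adj.homEquiv Y e).symm β := by
    rw [← adj.homEquiv_naturality_right_symm, hαβ, adj.homEquiv_naturality_left_symm]
  have hm : IsCart p (τ.map m) := hτ m (isCart_snd_of_isPullback m hpb hg')
  have hα : IsCart p ((adj.homEquiv X e').symm α) :=
    hg.of_comp (hsq' ▸ hm.comp_isIso _)
  have : IsIso ((adj.homEquiv X e').symm α) := hα.isIso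
  change IsCocart p (toTotal α)
  rwa [isCocart_toTotal_iff_isIso hu α]

theorem BCC.isCart_map (hcart : IsCartFib p) (hbcc : BCC p) {X Y : Comma p (𝟭 B)} {m : X ⟶ Y}
    (hm : IsCart (Comma.snd p (𝟭 B)) m) : IsCart p (τ.map m) := by
  obtain ⟨hpb, hl⟩ := (isCart_snd_iff hcart m).mp hm
  have hunit := isPullback_map_unit (fun X ↦ (hu X).isIso) hpb
  obtain ⟨w, k, l, hk, hl', hkl⟩ := hcart.exists_vertical_comp_isCart (τ.map m)
  let ηX : X.left ⟶ τ.obj X := toTotal (adj.unit.app X)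
  let ηY : Y.left ⟶ τ.obj Y := toTotal (adj.unit.app Y)
  have hsq : (ηX ≫ k) ≫ l = m.left ≫ ηY := by
    rw [Category.assoc, hkl]
    exact congrArg toTotal (adj.unit.naturality m).symm
  have hpb' : IsPullback (p.map (ηX ≫ k)) (p.map m.left) (p.map l) (p.map ηY) :=
    hunit.of_iso (Iso.refl _) (asIso (p.map k)) (Iso.refl _) (Iso.refl _)
      (by simp [ηX]) (by simp) (by simp [← p.map_comp, hkl]) (by simp [ηY])
  have hcocart : IsCocart p (ηX ≫ k) := hbcc _ _ _ _ hsq hpb' (hu Y).isCocart hl' hl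
  have : IsIso k := IsCocart.isIso_of_comp (hu X).isCocart hcocart
  rw [← hkl]
  apply hl'.isIso_comp

end FiberedAdjoint

theorem stmt_9_general (p : E ⥤ B) (hcart : IsCartFib p) (hcocart : IsCocartFib p) :
    BCC p ↔
      ∃ (τ : Comma p (𝟭 B) ⥤ E) (adj : τ ⊣ iota p),
        τ ⋙ p = Comma.snd p (𝟭 B) ∧
        (∀ X : Comma p (𝟭 B), IsIso ((adj.unit.app X).right)) ∧
        (∀ e : E, IsIso (p.map (adj.counit.app e))) ∧
        (∀ X : Comma p (𝟭 B), IsCocart p ((adj.unit.app X).left)) ∧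
        (∀ {X Y : Comma p (𝟭 B)} (φ : X ⟶ Y),
          IsCart (Comma.snd p (𝟭 B)) φ → IsCart p (τ.map φ)) := by
  constructor
  · intro hbcc
    obtain ⟨τ, adj, hτ, hu⟩ := exists_leftAdjoint_iota hcocart
    have hv := fun X ↦ (hu X).isIso
    exact ⟨τ, adj, hτ, hv, isIso_map_counit hv, fun X ↦ (hu X).isCocart,
      fun _ hφ ↦ hbcc.isCart_map hu hcart hφ⟩
  · rintro ⟨τ, adj, -, hunit_right, -, hunit_left, hτ⟩
    exact bcc_of_preserves_isCart (adj := adj) (fun X ↦ ⟨hunit_left X, hunit_right X⟩) hτ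

/-- For a bifibration `p` over a base with pullbacks, `p` satisfies the
Beck–Chevalley condition iff the functor `ι : E ⥤ (p ↓ B)` admits a fibered left
adjoint `τ` over `B` (with `p ∘ τ = ∂₁` and vertical unit and counit, given on objects
by cocartesian transport, i.e. the unit components are cocartesian) which moreover is a
cartesian functor over `B`. -/
theorem stmt_9 (p : E ⥤ B) [HasPullbacks B]
    (hcart : IsCartFib p) (hcocart : IsCocartFib p) :
    (IsCartFib (Comma.snd p (𝟭 B)) ∧ IsCocartFib (Comma.snd p (𝟭 B))) ∧
    (BCC p ↔
      ∃ (τ : Comma p (𝟭 B) ⥤ E) (adj : τ ⊣ iota p),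
        τ ⋙ p = Comma.snd p (𝟭 B) ∧
        (∀ X : Comma p (𝟭 B), IsIso ((adj.unit.app X).right)) ∧
        (∀ e : E, IsIso (p.map (adj.counit.app e))) ∧
        (∀ X : Comma p (𝟭 B), IsCocart p ((adj.unit.app X).left)) ∧
        (∀ {X Y : Comma p (𝟭 B)} (φ : X ⟶ Y),
          IsCart (Comma.snd p (𝟭 B)) φ → IsCart p (τ.map φ))) :=
  ⟨⟨isCartFib_snd hcart, isCocartFib_snd p⟩, stmt_9_general p hcart hcocart⟩

end MoensPaper
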